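/- arXiv:1804.02206 — 2 statements merged into one kernel-verified Lean document; each statement's English description precedes it below -/
import Mathlib

section
/- Let q > 2 and let u : ℝ/ℤ → ℝⁿ be an embedded, regular C¹ curve with bil(u) < ∞ and [u'/|u'|]_{W^{1-1/q,q}} < ∞. Then TP(u) ≤ (1/q) · (bil u)^{2q} · ‖u'‖_{L^∞}^{2q} · [u'/|u'|]_{W^{1-1/q,q}}^q, where u'/|u'| denotes the unit tangent field x ↦ u'(x)/|u'(x)|. -/
open MeasureTheory Set Filter
open scoped RealInnerProductSpace ENNReal Topology

noncomputable section

/-- The distance on the circle `ℝ/ℤ` between the points represented by `x` and `y`. -/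
def circDist (x y : ℝ) : ℝ := ‖((x - y : ℝ) : AddCircle (1 : ℝ))‖

/-- The representative of `z` modulo `1` lying in `(-1/2, 1/2]`. -/
def wrap (z : ℝ) : ℝ := 1 / 2 - Int.fract (1 / 2 - z)

/-- Squared wedge norm `|a ∧ b|² = |a|²|b|² - ⟨a,b⟩²`. -/
def wedgeSq {n : ℕ} (a b : EuclideanSpace ℝ (Fin n)) : ℝ :=
  ‖a‖ ^ 2 * ‖b‖ ^ 2 - ⟪a, b⟫ ^ 2

/-- Wedge inner product `⟨a∧b, c∧d⟩ = ⟨a,c⟩⟨b,d⟩ - ⟨a,d⟩⟨b,c⟩`. -/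
def wedgeInner {n : ℕ} (a b c d : EuclideanSpace ℝ (Fin n)) : ℝ :=
  ⟪a, c⟫ * ⟪b, d⟫ - ⟪a, d⟫ * ⟪b, c⟫

/-- Fundamental domain for double integrals over `(ℝ/ℤ)²`. -/
def unitSq : Set (ℝ × ℝ) := Ioc (0 : ℝ) 1 ×ˢ Ioc (0 : ℝ) 1

/-- The tangent-point functional `TP` (extended-real-valued). -/
def TPe {n : ℕ} (q : ℝ) (u : ℝ → EuclideanSpace ℝ (Fin n)) : ℝ≥0∞ :=
  ENNReal.ofReal (1 / q) *
    ∫⁻ p in unitSq, ENNReal.ofReal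
      (wedgeSq (deriv u p.2) (u p.1 - u p.2) ^ (q / 2) / ‖u p.1 - u p.2‖ ^ (2 * q))

/-- The tangent-point functional `TP` (real-valued). -/
def TPr {n : ℕ} (q : ℝ) (u : ℝ → EuclideanSpace ℝ (Fin n)) : ℝ := (TPe q u).toReal

/-- The `q`-th power of the Sobolev–Slobodeckii seminorm `[f]_{W^{s,q}}` on `ℝ/ℤ`. -/
def sobSemPow {n : ℕ} (s q : ℝ) (f : ℝ → EuclideanSpace ℝ (Fin n)) : ℝ≥0∞ :=
  ∫⁻ p in unitSq, ENNReal.ofReal (‖f p.1 - f p.2‖ ^ q / circDist p.1 p.2 ^ (1 + s * q))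

/-- The `W^{s,q}`-norm `‖f‖_{L^q} + [f]_{W^{s,q}}`. -/
def Wnorm {n : ℕ} (s q : ℝ) (f : ℝ → EuclideanSpace ℝ (Fin n)) : ℝ :=
  (∫ x in Ioc (0 : ℝ) 1, ‖f x‖ ^ q) ^ (1 / q) + (sobSemPow s q f).toReal ^ (1 / q)

/-- The bi-Lipschitz constant `bil(u) = sup_{x ≢ y} |x-y|_{ℝ/ℤ}/|u(x)-u(y)|`. -/
def bil {n : ℕ} (u : ℝ → EuclideanSpace ℝ (Fin n)) : ℝ≥0∞ :=
  ⨆ (x : ℝ) (y : ℝ) (_ : circDist x y ≠ 0),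
    ENNReal.ofReal (circDist x y) / ENNReal.ofReal ‖u x - u y‖

/-- The `L^∞`-norm of the derivative of `u`. -/
def linfD {n : ℕ} (u : ℝ → EuclideanSpace ℝ (Fin n)) : ℝ≥0∞ :=
  ⨆ x : ℝ, (‖deriv u x‖₊ : ℝ≥0∞)

/-- A periodic curve is embedded if it is injective on the circle `ℝ/ℤ`. -/
def Embedded {n : ℕ} (u : ℝ → EuclideanSpace ℝ (Fin n)) : Prop :=
  ∀ x y : ℝ, u x = u y → ((x : AddCircle (1 : ℝ)) = (y : AddCircle (1 : ℝ)))

/-- A curve is regular if `min_{ℝ/ℤ} |u'| > 0`. -/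
def Regular {n : ℕ} (u : ℝ → EuclideanSpace ℝ (Fin n)) : Prop :=
  0 < ⨅ x : ℝ, ‖deriv u x‖

/-- Orthogonal projection of `b` onto the orthogonal complement of `ℝ a`. -/
def projPerp {n : ℕ} (a b : EuclideanSpace ℝ (Fin n)) : EuclideanSpace ℝ (Fin n) :=
  b - (⟪b, a⟫ / ‖a‖ ^ 2) • a

/-- The classical tangent-point functional (extended-real-valued). -/
def TPcle {n : ℕ} (q : ℝ) (u : ℝ → EuclideanSpace ℝ (Fin n)) : ℝ≥0∞ :=
  ENNReal.ofReal (1 / q) *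
    ∫⁻ p in unitSq, ENNReal.ofReal
      (‖projPerp (deriv u p.2) (u p.1 - u p.2)‖ ^ q / ‖u p.1 - u p.2‖ ^ (2 * q) *
        (‖deriv u p.1‖ * ‖deriv u p.2‖))

/-- The integrand of the functional `M(u; v, w)`. -/
def Mintegrand {n : ℕ} (q : ℝ) (u v w : ℝ → EuclideanSpace ℝ (Fin n)) (p : ℝ × ℝ) : ℝ :=
  wedgeSq (deriv u p.2) (u p.1 - u p.2) ^ ((q - 2) / 2) / ‖u p.1 - u p.2‖ ^ (2 * q) *
    wedgeInner (deriv u p.2) (u p.1 - u p.2) (deriv v p.2)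
      (w p.1 - w p.2 - wrap (p.1 - p.2) • deriv w p.2)

/-- The functional `M(u; v, w)` appearing in the first variation of `TP`. -/
def Mfun {n : ℕ} (q : ℝ) (u v w : ℝ → EuclideanSpace ℝ (Fin n)) : ℝ :=
  ∫ p in unitSq, Mintegrand q u v w p

/-- The integrand of the functional `A(u; v, w)`. -/
def Aintegrand {n : ℕ} (q : ℝ) (u v w : ℝ → EuclideanSpace ℝ (Fin n)) (p : ℝ × ℝ) : ℝ :=
  wedgeSq (deriv u p.2) (u p.1 - u p.2) ^ (q / 2) / ‖u p.1 - u p.2‖ ^ (2 * q + 2) *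
    ⟪v p.1 - v p.2, w p.1 - w p.2⟫

/-- The functional `A(u; v, w)` appearing in the first variation of `TP`. -/
def Afun {n : ℕ} (q : ℝ) (u v w : ℝ → EuclideanSpace ℝ (Fin n)) : ℝ :=
  ∫ p in unitSq, Aintegrand q u v w p

/-- The first variation `δTP(u)[w] = M(u;u,w) + M(u;w,u) - 2A(u;u,w)`. -/
def deltaTP {n : ℕ} (q : ℝ) (u w : ℝ → EuclideanSpace ℝ (Fin n)) : ℝ :=
  Mfun q u u w + Mfun q u w u - 2 * Afun q u u w

/-- The `H²` inner product on periodic curves. -/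
def H2inner (v w : ℝ → EuclideanSpace ℝ (Fin 3)) : ℝ :=
  ∫ x in Ioc (0 : ℝ) 1,
    (⟪v x, w x⟫ + ⟪deriv v x, deriv w x⟫ + ⟪deriv (deriv v) x, deriv (deriv w) x⟫)

/-- The total energy `E(u) = (κ/2)∫|u''|² + ρ TP(u)`. -/
def energyE (κ ρ q : ℝ) (u : ℝ → EuclideanSpace ℝ (Fin 3)) : ℝ :=
  κ / 2 * (∫ x in Ioc (0 : ℝ) 1, ‖deriv (deriv u) x‖ ^ 2) + ρ * TPr q u

theorem wedgeSq_le_sq {n : ℕ} (a v : EuclideanSpace ℝ (Fin n)) (c : ℝ) :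
    wedgeSq a v ≤ (‖a‖ * ‖v - c • a‖) ^ 2 := by
  have h : wedgeSq a v = ‖a‖ ^ 2 * ‖v - c • a‖ ^ 2 - ⟪a, v - c • a⟫ ^ 2 := by
    rw [wedgeSq, norm_sub_sq_real, inner_sub_right, real_inner_smul_right, real_inner_smul_right,
      real_inner_self_eq_norm_sq, norm_smul, Real.norm_eq_abs, mul_pow, sq_abs,
      real_inner_comm a v]
    ring
  rw [h, mul_pow]
  nlinarith [sq_nonneg ⟪a, v - c • a⟫]

theorem wedgeSq_rpow_half_le {n : ℕ} {q : ℝ} (hq : 0 ≤ q) (a v : EuclideanSpace ℝ (Fin n))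
    (c : ℝ) : wedgeSq a v ^ (q / 2) ≤ (‖a‖ * ‖v - c • a‖) ^ q := by
  have h0 : 0 ≤ wedgeSq a v := by
    have := abs_real_inner_le_norm a v
    rw [wedgeSq, ← mul_pow, ← sq_abs ⟪a, v⟫]
    exact sub_nonneg.2 (pow_le_pow_left₀ (abs_nonneg _) this 2)
  calc wedgeSq a v ^ (q / 2) ≤ ((‖a‖ * ‖v - c • a‖) ^ 2) ^ (q / 2) :=
        Real.rpow_le_rpow h0 (wedgeSq_le_sq a v c) (by positivity)
    _ = (‖a‖ * ‖v - c • a‖) ^ q := by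
        rw [← Real.rpow_natCast, ← Real.rpow_mul (by positivity)]
        congr 1
        push_cast
        ring

theorem rpow_integral_le_integral_rpow {q : ℝ} (hq : 1 ≤ q) {f : ℝ → ℝ} (hf : Continuous f)
    (hf0 : ∀ t, 0 ≤ f t) : (∫ t in (0 : ℝ)..1, f t) ^ q ≤ ∫ t in (0 : ℝ)..1, f t ^ q := by
  have : IsProbabilityMeasure (volume.restrict (Ioc (0 : ℝ) 1)) := ⟨by simp⟩
  have hc : Continuous fun t => f t ^ q := hf.rpow_const fun _ => Or.inr (by linarith)
  rw [intervalIntegral.integral_of_le zero_le_one, intervalIntegral.integral_of_le zero_le_one]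
  exact (convexOn_rpow hq).map_integral_le
    (Real.continuous_rpow_const (by linarith)).continuousOn isClosed_Ici
    (Eventually.of_forall hf0) (hf.integrableOn_Ioc) (hc.integrableOn_Ioc)

/-- The chord of a regular curve deviates from the tangent line at `y` by at most the mean
oscillation of the unit tangent. -/
theorem exists_norm_chord_sub_smul_le {n : ℕ} {u : ℝ → EuclideanSpace ℝ (Fin n)}
    (hu : ContDiff ℝ 1 u) (hne : ∀ x, deriv u x ≠ 0) {L : ℝ} (hL : ∀ x, ‖deriv u x‖ ≤ L)
    (y z : ℝ) :
    ∃ c : ℝ, ‖u (y + z) - u y - c • deriv u y‖ ≤ |z| * (L * ∫ t in (0 : ℝ)..1,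
      ‖‖deriv u (y + t * z)‖⁻¹ • deriv u (y + t * z) - ‖deriv u y‖⁻¹ • deriv u y‖) := by
  have hd : Continuous (deriv u) := hu.continuous_deriv_one
  have hn0 : ∀ x, ‖deriv u x‖ ≠ 0 := fun x => norm_ne_zero_iff.2 (hne x)
  set τ : ℝ → EuclideanSpace ℝ (Fin n) := fun x => ‖deriv u x‖⁻¹ • deriv u x with hτ
  have hτc : Continuous τ := (hd.norm.inv₀ hn0).smul hd
  have hint : u (y + z) - u y = ∫ t in (0 : ℝ)..1, z • deriv u (y + t * z) := by
    have h : ∀ t ∈ uIcc (0 : ℝ) 1,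
        HasDerivAt (fun t => u (y + t * z)) (z • deriv u (y + t * z)) t := fun t _ => by
      have h1 : HasDerivAt (fun t : ℝ => y + t * z) z t := by
        simpa using ((hasDerivAt_id t).mul_const z).const_add y
      exact ((hu.differentiable (by simp)) _).hasDerivAt.scomp t h1
    rw [intervalIntegral.integral_eq_sub_of_hasDerivAt h
      (Continuous.intervalIntegrable (by fun_prop) _ _)]
    simp
  refine ⟨z * (∫ t in (0 : ℝ)..1, ‖deriv u (y + t * z)‖) * ‖deriv u y‖⁻¹, ?_⟩
  have hrem : u (y + z) - u y -
      (z * (∫ t in (0 : ℝ)..1, ‖deriv u (y + t * z)‖) * ‖deriv u y‖⁻¹) • deriv u y =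
      z • ∫ t in (0 : ℝ)..1, ‖deriv u (y + t * z)‖ • (τ (y + t * z) - τ y) := by
    rw [hint, intervalIntegral.integral_smul, mul_assoc, mul_smul, mul_smul, ← smul_sub,
      ← intervalIntegral.integral_smul_const, ← intervalIntegral.integral_sub
        (Continuous.intervalIntegrable (by fun_prop) _ _)
        (Continuous.intervalIntegrable (by fun_prop) _ _)]
    congr 2 with t
    rw [smul_sub, hτ]
    simp only [smul_smul, mul_inv_cancel₀ (hn0 _), one_smul]
  rw [hrem, norm_smul, Real.norm_eq_abs]
  refine mul_le_mul_of_nonneg_left ?_ (abs_nonneg z)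
  refine (intervalIntegral.norm_integral_le_integral_norm zero_le_one).trans ?_
  have hosc : Continuous fun t => L * ‖τ (y + t * z) - τ y‖ := by fun_prop
  rw [← intervalIntegral.integral_const_mul]
  refine intervalIntegral.integral_mono_on zero_le_one
    (Continuous.intervalIntegrable (by fun_prop) _ _)
    (hosc.intervalIntegrable _ _) fun t _ => ?_
  rw [norm_smul, norm_norm]
  exact mul_le_mul_of_nonneg_right (hL _) (norm_nonneg _)

theorem tangentPoint_integrand_le {n : ℕ} {q : ℝ} (hq : 1 ≤ q)
    {u : ℝ → EuclideanSpace ℝ (Fin n)} (hu : ContDiff ℝ 1 u) (hne : ∀ x, deriv u x ≠ 0)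
    {L B : ℝ} (hL : ∀ x, ‖deriv u x‖ ≤ L) {y z : ℝ} (hz : z ≠ 0) (hB : 0 ≤ B)
    (hbil : |z| ≤ B * ‖u (y + z) - u y‖) :
    wedgeSq (deriv u y) (u (y + z) - u y) ^ (q / 2) / ‖u (y + z) - u y‖ ^ (2 * q) ≤
      B ^ (2 * q) * L ^ (2 * q) * ∫ t in (0 : ℝ)..1,
        ‖‖deriv u (y + t * z)‖⁻¹ • deriv u (y + t * z) - ‖deriv u y‖⁻¹ • deriv u y‖ ^ q
          / |z| ^ q := by
  obtain ⟨c, hc⟩ := exists_norm_chord_sub_smul_le hu hne hL y z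
  have hd : Continuous (deriv u) := hu.continuous_deriv_one
  have hn0 : ∀ x, ‖deriv u x‖ ≠ 0 := fun x => norm_ne_zero_iff.2 (hne x)
  set τ : ℝ → EuclideanSpace ℝ (Fin n) := fun x => ‖deriv u x‖⁻¹ • deriv u x with hτ
  have hτc : Continuous τ := (hd.norm.inv₀ hn0).smul hd
  set J := ∫ t in (0 : ℝ)..1, ‖τ (y + t * z) - τ y‖ with hJ
  have hJ0 : 0 ≤ J := intervalIntegral.integral_nonneg zero_le_one fun _ _ => norm_nonneg _
  have hL0 : 0 ≤ L := (norm_nonneg _).trans (hL y)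
  have hz0 : 0 < |z| := abs_pos.2 hz
  have hJq : J ^ q ≤ ∫ t in (0 : ℝ)..1, ‖τ (y + t * z) - τ y‖ ^ q :=
    rpow_integral_le_integral_rpow hq (by fun_prop) fun _ => norm_nonneg _
  have hv : 0 < ‖u (y + z) - u y‖ := by
    by_contra h
    have : ‖u (y + z) - u y‖ = 0 := le_antisymm (not_lt.1 h) (norm_nonneg _)
    rw [this, mul_zero] at hbil
    linarith
  have hnum : wedgeSq (deriv u y) (u (y + z) - u y) ^ (q / 2) ≤ (L * (|z| * (L * J))) ^ q := by
    refine (wedgeSq_rpow_half_le (by linarith) _ _ c).trans ?_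
    exact Real.rpow_le_rpow (by positivity)
      (mul_le_mul (hL y) hc (norm_nonneg _) hL0) (by linarith)
  have hden : |z| ^ (2 * q) ≤ B ^ (2 * q) * ‖u (y + z) - u y‖ ^ (2 * q) := by
    rw [← Real.mul_rpow hB hv.le]
    exact Real.rpow_le_rpow hz0.le hbil (by linarith)
  have hsq : ∀ {r : ℝ}, 0 ≤ r → r ^ (2 * q) = r ^ q * r ^ q := fun {r} hr => by
    rw [two_mul, Real.rpow_add_of_nonneg hr (by linarith) (by linarith)]
  have hzq : 0 < |z| ^ q := Real.rpow_pos_of_pos hz0 q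
  rw [intervalIntegral.integral_div, div_le_iff₀ (Real.rpow_pos_of_pos hv _)]
  calc wedgeSq (deriv u y) (u (y + z) - u y) ^ (q / 2) ≤ (L * (|z| * (L * J))) ^ q := hnum
    _ = L ^ (2 * q) * (J ^ q / |z| ^ q) * |z| ^ (2 * q) := by
        rw [Real.mul_rpow hL0 (by positivity), Real.mul_rpow hz0.le (by positivity),
          Real.mul_rpow hL0 hJ0, hsq hL0, hsq hz0.le]
        field_simp
    _ ≤ L ^ (2 * q) * ((∫ t in (0 : ℝ)..1, ‖τ (y + t * z) - τ y‖ ^ q) / |z| ^ q) *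
          (B ^ (2 * q) * ‖u (y + z) - u y‖ ^ (2 * q)) := by
        have := (Real.rpow_nonneg hJ0 q).trans hJq
        gcongr
    _ = _ := by ring

/-- Averaging a function over dilations, with weight the dilation factor, does not increase
its integral over a centred interval. -/
theorem setLIntegral_lintegral_dilation_le {K : ℝ → ℝ≥0∞} (hK : Measurable K) :
    ∫⁻ z in Ioc (-(1 / 2) : ℝ) (1 / 2), ∫⁻ t in Ioc (0 : ℝ) 1, ENNReal.ofReal t * K (t * z) ≤
      ∫⁻ z in Ioc (-(1 / 2) : ℝ) (1 / 2), K z := by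
  set I : Set ℝ := Ioc (-(1 / 2) : ℝ) (1 / 2) with hI
  have hIm : MeasurableSet I := measurableSet_Ioc
  rw [lintegral_lintegral_swap (by fun_prop)]
  have key : ∀ t ∈ Ioc (0 : ℝ) 1,
      ∫⁻ z in I, ENNReal.ofReal t * K (t * z) ≤ ∫⁻ z in I, K z := fun t ht => by
    calc ∫⁻ z in I, ENNReal.ofReal t * K (t * z)
        ≤ ∫⁻ z in I, ENNReal.ofReal t * I.indicator K (t * z) := by
          refine setLIntegral_mono' hIm fun z hz => ?_
          have : t * z ∈ I := by
            rw [hI, mem_Ioc] at hz ⊢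
            constructor <;> nlinarith [ht.1, ht.2, hz.1, hz.2]
          rw [indicator_of_mem this]
      _ ≤ ∫⁻ z, ENNReal.ofReal t * I.indicator K (t * z) := setLIntegral_le_lintegral _ _
      _ = ∫⁻ z, I.indicator K z := by
          rw [lintegral_const_mul _ (by fun_prop (disch := assumption))]
          conv_rhs => rw [← Real.smul_map_volume_mul_left ht.1.ne']
          rw [lintegral_smul_measure, lintegral_map (hK.indicator hIm) (by fun_prop),
            abs_of_pos ht.1, smul_eq_mul]
      _ = ∫⁻ z in I, K z := lintegral_indicator hIm K
  calc ∫⁻ t in Ioc (0 : ℝ) 1, ∫⁻ z in I, ENNReal.ofReal t * K (t * z)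
      ≤ ∫⁻ _ in Ioc (0 : ℝ) 1, ∫⁻ z in I, K z := setLIntegral_mono' measurableSet_Ioc key
    _ = ∫⁻ z in I, K z := by simp

theorem circDist_add_left {y z : ℝ} (hz : |z| ≤ 1 / 2) : circDist (y + z) y = |z| := by
  rw [circDist, add_sub_cancel_left, AddCircle.norm_coe_eq_abs_iff 1 one_ne_zero]
  simpa using hz

theorem Function.Periodic.setLIntegral_Ioc_eq {f : ℝ → ℝ≥0∞} (hf : Function.Periodic f 1) (y : ℝ) :
    ∫⁻ x in Ioc (0 : ℝ) 1, f x = ∫⁻ z in Ioc (-(1 / 2) : ℝ) (1 / 2), f (y + z) := by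
  have h := (isAddFundamentalDomain_Ioc one_pos (0 : ℝ)).setLIntegral_eq
    (isAddFundamentalDomain_Ioc one_pos (y - 1 / 2)) f hf.map_vadd_zmultiples
  rw [zero_add] at h
  rw [h, ← (measurePreserving_add_left volume y).setLIntegral_comp_preimage_emb
    (measurableEmbedding_addLeft y) f]
  congr 2
  ext z
  simp only [mem_preimage, mem_Ioc]
  constructor <;> rintro ⟨h1, h2⟩ <;> constructor <;> linarith

theorem Function.Periodic.periodic_deriv {E : Type*} [NormedAddCommGroup E] [NormedSpace ℝ E] {f : ℝ → E} {c : ℝ}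
    (hf : Function.Periodic f c) : Function.Periodic (deriv f) c := fun x => by
  rw [← deriv_comp_add_const, show (fun x => f (x + c)) = f from funext hf]

theorem circDist_add_one_left (x y : ℝ) : circDist (x + 1) y = circDist x y := by
  rw [circDist, circDist, show x + 1 - y = x - y + 1 by ring, AddCircle.coe_add_period]

theorem measurable_circDist : Measurable fun p : ℝ × ℝ => circDist p.1 p.2 := by
  have : Continuous fun p : ℝ × ℝ => circDist p.1 p.2 :=
    ((AddCircle.continuous_mk' 1).comp (continuous_fst.sub continuous_snd)).norm
  exact this.measurable

theorem setLIntegral_unitSq_eq {F : ℝ × ℝ → ℝ≥0∞} (hF : Measurable F)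
    (hper : ∀ y, Function.Periodic (fun x => F (x, y)) 1) :
    ∫⁻ p in unitSq, F p =
      ∫⁻ y in Ioc (0 : ℝ) 1, ∫⁻ z in Ioc (-(1 / 2) : ℝ) (1 / 2), F (y + z, y) := by
  rw [unitSq, Measure.volume_eq_prod, ← Measure.prod_restrict, lintegral_prod_symm' _ hF]
  exact lintegral_congr fun y => (hper y).setLIntegral_Ioc_eq y

theorem setLIntegral_tangentPoint_le {n : ℕ} {q : ℝ} (hq : 1 ≤ q)
    {u : ℝ → EuclideanSpace ℝ (Fin n)} (hu : ContDiff ℝ 1 u) (hne : ∀ x, deriv u x ≠ 0)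
    {L B : ℝ} (hL : ∀ x, ‖deriv u x‖ ≤ L) (hB : 0 ≤ B)
    (hbil : ∀ y z : ℝ, |z| ≤ 1 / 2 → |z| ≤ B * ‖u (y + z) - u y‖) (y : ℝ) :
    ∫⁻ z in Ioc (-(1 / 2) : ℝ) (1 / 2), ENNReal.ofReal
      (wedgeSq (deriv u y) (u (y + z) - u y) ^ (q / 2) / ‖u (y + z) - u y‖ ^ (2 * q)) ≤
    ENNReal.ofReal (B ^ (2 * q) * L ^ (2 * q)) *
      ∫⁻ z in Ioc (-(1 / 2) : ℝ) (1 / 2), ENNReal.ofReal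
        (‖‖deriv u (y + z)‖⁻¹ • deriv u (y + z) - ‖deriv u y‖⁻¹ • deriv u y‖ ^ q / |z| ^ q) := by
  have hd : Continuous (deriv u) := hu.continuous_deriv_one
  have hn0 : ∀ x, ‖deriv u x‖ ≠ 0 := fun x => norm_ne_zero_iff.2 (hne x)
  have hL0 : 0 ≤ L := (norm_nonneg _).trans (hL y)
  set τ : ℝ → EuclideanSpace ℝ (Fin n) := fun x => ‖deriv u x‖⁻¹ • deriv u x with hτ
  have hτc : Continuous τ := (hd.norm.inv₀ hn0).smul hd
  have hτm : Measurable τ := hτc.measurable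
  set K : ℝ → ℝ≥0∞ := fun z => ENNReal.ofReal (‖τ (y + z) - τ y‖ ^ q / |z| ^ q) with hKdef
  have hK : Measurable K := by fun_prop
  have hpt : ∀ z ∈ Ioc (-(1 / 2) : ℝ) (1 / 2), ENNReal.ofReal
      (wedgeSq (deriv u y) (u (y + z) - u y) ^ (q / 2) / ‖u (y + z) - u y‖ ^ (2 * q)) ≤
      ENNReal.ofReal (B ^ (2 * q) * L ^ (2 * q)) *
        ∫⁻ t in Ioc (0 : ℝ) 1, ENNReal.ofReal t * K (t * z) := fun z hz => by
    rcases eq_or_ne z 0 with rfl | hz0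
    · have h2q : 2 * q ≠ 0 := by positivity
      simp [Real.zero_rpow h2q]
    have hcont : Continuous fun t : ℝ => ‖τ (y + t * z) - τ y‖ ^ q / |z| ^ q :=
      Continuous.div_const (Continuous.rpow_const (by fun_prop)
        fun _ => Or.inr (by linarith)) _
    refine (ENNReal.ofReal_le_ofReal (tangentPoint_integrand_le hq hu hne hL hz0 hB
      (hbil y z (abs_le.2 ⟨hz.1.le, hz.2⟩)))).trans ?_
    rw [ENNReal.ofReal_mul (by positivity), intervalIntegral.integral_of_le zero_le_one,
      ofReal_integral_eq_lintegral_ofReal hcont.integrableOn_Ioc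
        (Eventually.of_forall fun t => by positivity)]
    refine mul_le_mul_right (setLIntegral_mono' measurableSet_Ioc fun t ht => ?_) _
    rw [hKdef, ← ENNReal.ofReal_mul ht.1.le]
    refine ENNReal.ofReal_le_ofReal ?_
    have htq : t ^ q ≤ t := by
      simpa using Real.rpow_le_rpow_of_exponent_ge ht.1 ht.2 hq
    have htq0 : 0 < t ^ q := Real.rpow_pos_of_pos ht.1 q
    have hzq0 : 0 < |z| ^ q := Real.rpow_pos_of_pos (abs_pos.2 hz0) q
    rw [abs_mul, abs_of_pos ht.1, Real.mul_rpow ht.1.le (abs_nonneg z)]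
    calc ‖τ (y + t * z) - τ y‖ ^ q / |z| ^ q
        = t ^ q * (‖τ (y + t * z) - τ y‖ ^ q / (t ^ q * |z| ^ q)) := by field_simp
      _ ≤ t * (‖τ (y + t * z) - τ y‖ ^ q / (t ^ q * |z| ^ q)) := by gcongr
  calc _ ≤ ∫⁻ z in Ioc (-(1 / 2) : ℝ) (1 / 2), ENNReal.ofReal (B ^ (2 * q) * L ^ (2 * q)) *
        ∫⁻ t in Ioc (0 : ℝ) 1, ENNReal.ofReal t * K (t * z) :=
        setLIntegral_mono' measurableSet_Ioc hpt
    _ = ENNReal.ofReal (B ^ (2 * q) * L ^ (2 * q)) * ∫⁻ z in Ioc (-(1 / 2) : ℝ) (1 / 2),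
        ∫⁻ t in Ioc (0 : ℝ) 1, ENNReal.ofReal t * K (t * z) :=
        lintegral_const_mul' _ _ ENNReal.ofReal_ne_top
    _ ≤ _ := mul_le_mul_right (setLIntegral_lintegral_dilation_le hK) _

theorem linfD_lt_top {n : ℕ} {u : ℝ → EuclideanSpace ℝ (Fin n)} (hu : ContDiff ℝ 1 u)
    (hper : Function.Periodic u 1) : linfD u < ⊤ := by
  obtain ⟨C, hC⟩ := ((hper.periodic_deriv).isBounded_of_continuous one_ne_zero
    hu.continuous_deriv_one).exists_norm_le
  refine (iSup_le fun x => ?_).trans_lt (ENNReal.coe_lt_top (r := C.toNNReal))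
  exact ENNReal.coe_le_coe.2 (NNReal.le_toNNReal_of_coe_le (hC _ (mem_range_self x)))

theorem norm_deriv_le_toReal_linfD {n : ℕ} {u : ℝ → EuclideanSpace ℝ (Fin n)}
    (h : linfD u < ⊤) (x : ℝ) : ‖deriv u x‖ ≤ (linfD u).toReal := by
  have : (‖deriv u x‖₊ : ℝ≥0∞) ≤ linfD u := le_iSup (fun x => (‖deriv u x‖₊ : ℝ≥0∞)) x
  simpa using ENNReal.toReal_mono h.ne this

theorem circDist_le_toReal_bil_mul {n : ℕ} {u : ℝ → EuclideanSpace ℝ (Fin n)}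
    (h : bil u < ⊤) (x y : ℝ) : circDist x y ≤ (bil u).toReal * ‖u x - u y‖ := by
  rcases eq_or_ne (circDist x y) 0 with h0 | h0
  · rw [h0]
    positivity
  have hle : ENNReal.ofReal (circDist x y) / ENNReal.ofReal ‖u x - u y‖ ≤ bil u :=
    le_iSup_of_le x (le_iSup_of_le y (le_iSup_of_le h0 le_rfl))
  have hpos : 0 < circDist x y := lt_of_le_of_ne (norm_nonneg _) h0.symm
  have hv : 0 < ‖u x - u y‖ := by
    by_contra hv
    have hv0 : ‖u x - u y‖ = 0 := le_antisymm (not_lt.1 hv) (norm_nonneg _)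
    rw [hv0, ENNReal.ofReal_zero, ENNReal.div_zero (by simpa using hpos)] at hle
    exact absurd h (not_lt.2 hle)
  rw [← ENNReal.ofReal_div_of_pos hv] at hle
  have := ENNReal.toReal_mono h.ne hle
  rwa [ENNReal.toReal_ofReal (by positivity), div_le_iff₀ hv] at this

theorem Regular.deriv_ne_zero {n : ℕ} {u : ℝ → EuclideanSpace ℝ (Fin n)} (hu : Regular u)
    (x : ℝ) : deriv u x ≠ 0 := by
  have hbdd : BddBelow (range fun x => ‖deriv u x‖) := ⟨0, by rintro _ ⟨x, rfl⟩; positivity⟩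
  exact norm_pos_iff.1 (lt_of_lt_of_le hu (ciInf_le hbdd x))

/-- Energy estimate in terms of the unit tangent, eq. (3.4*):
`TP(u) ≤ (1/q) (bil u)^{2q} ‖u'‖_{L^∞}^{2q} [u'/|u'|]_{W^{1-1/q,q}}^q`. -/
theorem tp_energy_estimate_unit_tangent (n : ℕ) (q : ℝ) (hq : 2 < q)
    (u : ℝ → EuclideanSpace ℝ (Fin n))
    (hC1 : ContDiff ℝ 1 u) (hper : Function.Periodic u 1)
    (hemb : Embedded u) (hreg : Regular u)
    (hbil : bil u < ⊤)
    (hsem : sobSemPow (1 - 1 / q) q (fun x => ‖deriv u x‖⁻¹ • deriv u x) < ⊤) :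
    TPe q u ≤ ENNReal.ofReal (1 / q) * bil u ^ (2 * q) * linfD u ^ (2 * q) *
      sobSemPow (1 - 1 / q) q (fun x => ‖deriv u x‖⁻¹ • deriv u x) := by
  set τ : ℝ → EuclideanSpace ℝ (Fin n) := fun x => ‖deriv u x‖⁻¹ • deriv u x with hτ
  have hne := hreg.deriv_ne_zero
  have hd : Continuous (deriv u) := hC1.continuous_deriv_one
  have hu : Continuous u := hC1.continuous
  have hdper : Function.Periodic (deriv u) 1 := hper.periodic_deriv
  have hτm : Measurable τ :=
    ((hd.norm.inv₀ fun x => norm_ne_zero_iff.2 (hne x)).smul hd).measurable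
  have hlin := linfD_lt_top hC1 hper
  have hexp : 1 + (1 - 1 / q) * q = q := by
    have : q ≠ 0 := by linarith
    field_simp
    ring
  have hF : Measurable fun p : ℝ × ℝ => ENNReal.ofReal
      (wedgeSq (deriv u p.2) (u p.1 - u p.2) ^ (q / 2) / ‖u p.1 - u p.2‖ ^ (2 * q)) := by
    have := hd.measurable
    have := hu.measurable
    have hw : Continuous fun p : ℝ × ℝ => wedgeSq (deriv u p.2) (u p.1 - u p.2) := by
      unfold wedgeSq
      fun_prop
    have := hw.measurable
    fun_prop
  have hG : Measurable fun p : ℝ × ℝ => ENNReal.ofReal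
      (‖τ p.1 - τ p.2‖ ^ q / circDist p.1 p.2 ^ (1 + (1 - 1 / q) * q)) := by
    have := measurable_circDist
    fun_prop
  have hC : ENNReal.ofReal ((bil u).toReal ^ (2 * q) * (linfD u).toReal ^ (2 * q)) =
      bil u ^ (2 * q) * linfD u ^ (2 * q) := by
    rw [ENNReal.ofReal_mul (by positivity),
      ← ENNReal.ofReal_rpow_of_nonneg ENNReal.toReal_nonneg (by linarith),
      ← ENNReal.ofReal_rpow_of_nonneg ENNReal.toReal_nonneg (by linarith),
      ENNReal.ofReal_toReal hbil.ne, ENNReal.ofReal_toReal hlin.ne]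
  rw [TPe, sobSemPow, mul_assoc, mul_assoc, ← mul_assoc (bil u ^ (2 * q)), ← hC]
  gcongr
  rw [setLIntegral_unitSq_eq hF fun y x => by simp only [hper x],
    setLIntegral_unitSq_eq hG fun y x => by
      simp only [hτ, hdper x, circDist_add_one_left],
    ← lintegral_const_mul' _ _ ENNReal.ofReal_ne_top]
  refine lintegral_mono fun y => ?_
  refine (setLIntegral_tangentPoint_le (by linarith) hC1 hne (norm_deriv_le_toReal_linfD hlin)
    (B := (bil u).toReal) ENNReal.toReal_nonneg (fun y z hz => ?_) y).trans_eq ?_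
  · simpa [circDist_add_left hz] using circDist_le_toReal_bil_mul hbil (y + z) y
  · congr 1
    refine setLIntegral_congr_fun measurableSet_Ioc fun z hz => ?_
    simp only [hexp, circDist_add_left (abs_le.2 ⟨hz.1.le, hz.2⟩), hτ]
end
end

section
/- Let q > 2 and λ, Λ, M > 0. There is a constant C = C(λ, Λ, M, n, q) > 0 such that every embedded, regular C¹ curve u : ℝ/ℤ → ℝⁿ with [u']_{W^{1-1/q,q}} < ∞, with λ ≤ |u'(x)| ≤ Λ for all x, and with TP(u) ≤ M satisfies |x−y|_{ℝ/ℤ} ≤ C |u(x) − u(y)| for all x, y ∈ ℝ/ℤ; in particular bil(u) ≤ C. -/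
open MeasureTheory Set Filter
open scoped RealInnerProductSpace ENNReal Topology

noncomputable section

/-- The integrand of the tangent-point functional. -/
def tpIntegrand {n : ℕ} (q : ℝ) (u : ℝ → EuclideanSpace ℝ (Fin n)) (x y : ℝ) : ℝ≥0∞ :=
  ENNReal.ofReal (wedgeSq (deriv u y) (u x - u y) ^ (q / 2) / ‖u x - u y‖ ^ (2 * q))

/-- The inner integral of the tangent-point functional. -/
def tpDensity {n : ℕ} (q : ℝ) (u : ℝ → EuclideanSpace ℝ (Fin n)) (x : ℝ) : ℝ≥0∞ :=
  ∫⁻ y in Ioc (0 : ℝ) 1, tpIntegrand q u x y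

/-- The unit secant vector pointing from `u x` to `u y`. -/
def secant {n : ℕ} (u : ℝ → EuclideanSpace ℝ (Fin n)) (x y : ℝ) : EuclideanSpace ℝ (Fin n) :=
  ‖u y - u x‖⁻¹ • (u y - u x)

/-- The unit tangent vector. -/
def unitTangent {n : ℕ} (u : ℝ → EuclideanSpace ℝ (Fin n)) (x : ℝ) : EuclideanSpace ℝ (Fin n) :=
  ‖deriv u x‖⁻¹ • deriv u x

lemma secant_swap {n : ℕ} (u : ℝ → EuclideanSpace ℝ (Fin n)) (x y : ℝ) :
    secant u y x = -secant u x y := by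
  simp only [secant]
  rw [norm_sub_rev, ← smul_neg, neg_sub]

lemma wedgeSq_neg_right {n : ℕ} (a b : EuclideanSpace ℝ (Fin n)) :
    wedgeSq a (-b) = wedgeSq a b := by
  simp [wedgeSq]

lemma hasDerivAt_normalize {n : ℕ} {w : ℝ → EuclideanSpace ℝ (Fin n)}
    {w' : EuclideanSpace ℝ (Fin n)} {t : ℝ} (hw : HasDerivAt w w' t) (h : w t ≠ 0) :
    HasDerivAt (fun y => ‖w y‖⁻¹ • w y)
      (‖w t‖⁻¹ • w' - (⟪w t, w'⟫ / ‖w t‖ ^ 3) • w t) t := by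
  have h0 : ‖w t‖ ≠ 0 := norm_ne_zero_iff.2 h
  have h1 := hw.norm_sq.sqrt (by positivity)
  simp only [Real.sqrt_sq (norm_nonneg _)] at h1
  refine ((h1.inv h0).smul hw).congr_deriv ?_
  rw [sub_eq_add_neg, ← neg_smul]
  congr 2
  field_simp

lemma norm_sq_deriv_normalize {n : ℕ} (w v : EuclideanSpace ℝ (Fin n)) (h : w ≠ 0) :
    ‖‖w‖⁻¹ • v - (⟪w, v⟫ / ‖w‖ ^ 3) • w‖ ^ 2 = wedgeSq v w / ‖w‖ ^ 4 := by
  have h0 : ‖w‖ ≠ 0 := norm_ne_zero_iff.2 h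
  rw [norm_sub_sq_real, norm_smul, norm_smul, real_inner_smul_left, real_inner_smul_right,
    mul_pow, mul_pow, Real.norm_eq_abs, Real.norm_eq_abs, sq_abs, sq_abs, wedgeSq,
    real_inner_comm w v]
  field_simp
  ring

lemma enorm_rpow_deriv_normalize {n : ℕ} {q : ℝ} (hq : 0 < q) (w v : EuclideanSpace ℝ (Fin n))
    (h : w ≠ 0) :
    ‖‖w‖⁻¹ • v - (⟪w, v⟫ / ‖w‖ ^ 3) • w‖ₑ ^ q =
      ENNReal.ofReal (wedgeSq v w ^ (q / 2) / ‖w‖ ^ (2 * q)) := by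
  have h2 := norm_sq_deriv_normalize w v h
  set z := ‖w‖⁻¹ • v - (⟪w, v⟫ / ‖w‖ ^ 3) • w
  have hw : 0 < ‖w‖ := norm_pos_iff.2 h
  have hW : wedgeSq v w = (‖z‖ * ‖w‖ ^ 2) ^ 2 := by
    rw [mul_pow, h2]
    field_simp
  rw [← ofReal_norm, ENNReal.ofReal_rpow_of_nonneg (norm_nonneg _) hq.le, hW,
    ← Real.rpow_natCast (‖z‖ * ‖w‖ ^ 2) 2, ← Real.rpow_mul (by positivity)]
  congr 1
  rw [show ((2 : ℕ) : ℝ) * (q / 2) = q by push_cast; ring, Real.mul_rpow (by positivity)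
    (by positivity), ← Real.rpow_natCast ‖w‖ 2, ← Real.rpow_mul hw.le]
  push_cast
  rw [mul_div_assoc, div_self (by positivity), mul_one]

lemma lintegral_enorm_le_rpow_mul {E : Type*} [NormedAddCommGroup E] {q : ℝ} (hq : 1 < q)
    {μ : Measure ℝ} {f : ℝ → E} (hf : AEStronglyMeasurable f μ) :
    ∫⁻ y, ‖f y‖ₑ ∂μ ≤ (∫⁻ y, ‖f y‖ₑ ^ q ∂μ) ^ (1 / q) * μ univ ^ (1 - 1 / q) := by
  have hc := Real.HolderConjugate.conjExponent hq
  have := ENNReal.lintegral_mul_le_Lp_mul_Lq μ hc hf.enorm (aemeasurable_const (b := (1 : ℝ≥0∞)))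
  have e : 1 / q.conjExponent = 1 - 1 / q := by
    rw [one_div, one_div, hc.one_sub_inv]
  simpa [e] using this

lemma setLIntegral_Ioc_periodic {f : ℝ → ℝ≥0∞} (hf : Function.Periodic f 1) (a b : ℝ) :
    ∫⁻ y in Ioc a (a + 1), f y = ∫⁻ y in Ioc b (b + 1), f y := by
  refine (isAddFundamentalDomain_Ioc one_pos a).setLIntegral_eq
    (isAddFundamentalDomain_Ioc one_pos b) f ?_
  rintro ⟨g, hg⟩ x
  obtain ⟨k, rfl⟩ := AddSubgroup.mem_zmultiples_iff.1 hg
  rw [AddSubgroup.vadd_def, vadd_eq_add, add_comm]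
  exact hf.zsmul k x

lemma periodic_deriv {n : ℕ} {u : ℝ → EuclideanSpace ℝ (Fin n)} (hper : Function.Periodic u 1) :
    Function.Periodic (deriv u) 1 := fun x => by
  rw [← deriv_comp_add_const]
  congr 1
  exact funext hper

lemma measurable_tpIntegrand {n : ℕ} (q : ℝ) {u : ℝ → EuclideanSpace ℝ (Fin n)}
    (hu : ContDiff ℝ 1 u) : Measurable (Function.uncurry (tpIntegrand q u)) := by
  have h1 : Continuous u := hu.continuous
  have h2 : Continuous (deriv u) := hu.continuous_deriv le_rfl
  have hA : Continuous fun p : ℝ × ℝ => wedgeSq (deriv u p.2) (u p.1 - u p.2) := by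
    unfold wedgeSq
    fun_prop
  have hB : Continuous fun p : ℝ × ℝ => ‖u p.1 - u p.2‖ := by fun_prop
  exact ((hA.measurable.pow_const _).div (hB.measurable.pow_const _)).ennreal_ofReal

lemma periodic_tpDensity {n : ℕ} (q : ℝ) {u : ℝ → EuclideanSpace ℝ (Fin n)}
    (hper : Function.Periodic u 1) : Function.Periodic (tpDensity q u) 1 := fun x => by
  simp only [tpDensity, tpIntegrand, hper x]

lemma lintegral_tpDensity_le {n : ℕ} {q M : ℝ} (hq : 0 < q) {u : ℝ → EuclideanSpace ℝ (Fin n)}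
    (hu : ContDiff ℝ 1 u) (hT : TPe q u ≤ ENNReal.ofReal M) :
    ∫⁻ x in Ioc (0 : ℝ) 1, tpDensity q u x ≤ ENNReal.ofReal (q * M) := by
  have h := setLIntegral_prod (μ := volume) (ν := volume) (s := Ioc (0 : ℝ) 1)
    (t := Ioc (0 : ℝ) 1) _ (measurable_tpIntegrand q hu).aemeasurable
  have hT' : ENNReal.ofReal (1 / q) * ∫⁻ x in Ioc (0 : ℝ) 1, tpDensity q u x ≤
      ENNReal.ofReal M := by
    have e : ∫⁻ x in Ioc (0 : ℝ) 1, tpDensity q u x =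
      ∫⁻ x in Ioc (0 : ℝ) 1, ∫⁻ y in Ioc (0 : ℝ) 1, Function.uncurry (tpIntegrand q u) (x, y) :=
        rfl
    rw [e, ← h]
    exact hT
  calc ∫⁻ x in Ioc (0 : ℝ) 1, tpDensity q u x
      = ENNReal.ofReal q * (ENNReal.ofReal (1 / q) * ∫⁻ x in Ioc (0 : ℝ) 1, tpDensity q u x) := by
        rw [← mul_assoc, ← ENNReal.ofReal_mul hq.le, mul_one_div_cancel hq.ne',
          ENNReal.ofReal_one, one_mul]
    _ ≤ ENNReal.ofReal q * ENNReal.ofReal M := by gcongr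
    _ = _ := (ENNReal.ofReal_mul hq.le).symm

lemma exists_tpDensity_le {n : ℕ} {q A : ℝ} {u : ℝ → EuclideanSpace ℝ (Fin n)}
    (hu : ContDiff ℝ 1 u) (hper : Function.Periodic u 1)
    (hA : ∫⁻ x in Ioc (0 : ℝ) 1, tpDensity q u x ≤ ENNReal.ofReal A)
    (x : ℝ) {r : ℝ} (hr : 0 < r) (hr1 : r ≤ 1) :
    ∃ w ∈ Ioc x (x + r), tpDensity q u w ≤ ENNReal.ofReal (A / r) := by
  have hm : Measurable (tpDensity q u) := (measurable_tpIntegrand q hu).lintegral_prod_right'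
  have hv : volume (Ioc x (x + r)) = ENNReal.ofReal r := by simp
  obtain ⟨w, hw, h⟩ := exists_le_setLAverage (μ := volume) (s := Ioc x (x + r))
    (f := tpDensity q u) (by simpa [hv] using hr) (by simp [hv]) hm.aemeasurable
  refine ⟨w, hw, h.trans ?_⟩
  rw [setLAverage_eq, hv, ENNReal.ofReal_div_of_pos hr]
  gcongr
  calc ∫⁻ x in Ioc x (x + r), tpDensity q u x
      ≤ ∫⁻ x in Ioc x (x + 1), tpDensity q u x :=
        lintegral_mono_set (Ioc_subset_Ioc_right (by linarith))
    _ = ∫⁻ x in Ioc 0 (0 + 1), tpDensity q u x :=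
        setLIntegral_Ioc_periodic (periodic_tpDensity q hper) _ _
    _ ≤ _ := by simpa using hA

/-- Hölder continuity of `y ↦ secant u x y` away from the diagonal. -/
lemma norm_secant_sub_le {n : ℕ} {q B : ℝ} (hq : 1 < q) {u : ℝ → EuclideanSpace ℝ (Fin n)}
    (hu : ContDiff ℝ 1 u) (hper : Function.Periodic u 1) {x y₁ y₂ : ℝ} (hB : 0 ≤ B)
    (hx : tpDensity q u x ≤ ENNReal.ofReal B) (hy : y₁ ≤ y₂) (hy1 : y₂ ≤ y₁ + 1)
    (hne : ∀ y ∈ Icc y₁ y₂, u y ≠ u x) :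
    ‖secant u x y₂ - secant u x y₁‖ ≤ (y₂ - y₁) ^ (1 - 1 / q) * B ^ (1 / q) := by
  have hq0 : 0 < q := by linarith
  have hu1 : Continuous u := hu.continuous
  have hu2 : Continuous (deriv u) := hu.continuous_deriv le_rfl
  set F : ℝ → EuclideanSpace ℝ (Fin n) := fun y =>
    ‖u y - u x‖⁻¹ • deriv u y - (⟪u y - u x, deriv u y⟫ / ‖u y - u x‖ ^ 3) • (u y - u x) with hF
  have hne' : ∀ y ∈ Icc y₁ y₂, u y - u x ≠ 0 := fun y hy => sub_ne_zero.2 (hne y hy)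
  have hder : ∀ y ∈ uIcc y₁ y₂, HasDerivAt (secant u x) (F y) y := by
    intro y hy'
    rw [uIcc_of_le hy] at hy'
    exact hasDerivAt_normalize
      (((hu.differentiable one_ne_zero) y).hasDerivAt.sub_const (u x)) (hne' y hy')
  have hcont : ContinuousOn F (Icc y₁ y₂) := by
    have hn : ∀ y ∈ Icc y₁ y₂, ‖u y - u x‖ ≠ 0 := fun y hy => norm_ne_zero_iff.2 (hne' y hy)
    refine ContinuousOn.sub (ContinuousOn.smul (ContinuousOn.inv₀ (by fun_prop) hn)
      (by fun_prop)) (ContinuousOn.smul (ContinuousOn.div (by fun_prop) (by fun_prop)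
        fun y hy => pow_ne_zero _ (hn y hy)) (by fun_prop))
  have hint := intervalIntegral.integral_eq_sub_of_hasDerivAt hder
    (hcont.intervalIntegrable_of_Icc hy)
  rw [← hint, intervalIntegral.integral_of_le hy]
  have hmeas : AEStronglyMeasurable F (volume.restrict (Ioc y₁ y₂)) :=
    (hcont.mono Ioc_subset_Icc_self).aestronglyMeasurable measurableSet_Ioc
  have hpow : ∫⁻ y in Ioc y₁ y₂, ‖F y‖ₑ ^ q ≤ ENNReal.ofReal B := by
    calc ∫⁻ y in Ioc y₁ y₂, ‖F y‖ₑ ^ q = ∫⁻ y in Ioc y₁ y₂, tpIntegrand q u x y := by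
          refine setLIntegral_congr_fun measurableSet_Ioc fun y hy' => ?_
          have := enorm_rpow_deriv_normalize hq0 _ (deriv u y) (hne' y (Ioc_subset_Icc_self hy'))
          simp only [hF, this, tpIntegrand]
          rw [← neg_sub (u y) (u x), wedgeSq_neg_right, norm_neg]
      _ ≤ ∫⁻ y in Ioc y₁ (y₁ + 1), tpIntegrand q u x y :=
          lintegral_mono_set (Ioc_subset_Ioc_right hy1)
      _ = ∫⁻ y in Ioc 0 (0 + 1), tpIntegrand q u x y := by
          refine setLIntegral_Ioc_periodic (fun y => ?_) _ _
          simp only [tpIntegrand, hper y, periodic_deriv hper y]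
      _ ≤ _ := by simpa [tpDensity] using hx
  have key : ‖∫ y in Ioc y₁ y₂, F y‖ₑ ≤
      ENNReal.ofReal ((y₂ - y₁) ^ (1 - 1 / q) * B ^ (1 / q)) := by
    have h1 : 0 ≤ 1 - 1 / q := by
      rw [sub_nonneg, div_le_one hq0]; exact hq.le
    refine (enorm_integral_le_lintegral_enorm _).trans
      ((lintegral_enorm_le_rpow_mul hq hmeas).trans ?_)
    rw [mul_comm, ENNReal.ofReal_mul (by have := sub_nonneg.2 hy; positivity),
      ← ENNReal.ofReal_rpow_of_nonneg (sub_nonneg.2 hy) h1,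
      ← ENNReal.ofReal_rpow_of_nonneg hB (by positivity)]
    simp only [Measure.restrict_apply_univ, Real.volume_Ioc]
    gcongr
  rw [← ofReal_norm] at key
  exact (ENNReal.ofReal_le_ofReal_iff (by have := sub_nonneg.2 hy; positivity)).1 key

lemma Embedded.ne_of_abs_sub_lt_one {n : ℕ} {u : ℝ → EuclideanSpace ℝ (Fin n)}
    (hemb : Embedded u) {x y : ℝ} (h0 : x ≠ y) (h1 : |x - y| < 1) : u x ≠ u y := by
  intro h
  have h2 : ((x - y : ℝ) : AddCircle (1 : ℝ)) = 0 := by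
    rw [AddCircle.coe_sub, hemb x y h, sub_self]
  obtain ⟨k, hk⟩ := (AddCircle.coe_eq_zero_iff (1 : ℝ)).1 h2
  rw [zsmul_eq_mul, mul_one] at hk
  rw [← hk] at h1
  have : k = 0 := Int.abs_lt_one_iff.1 (by exact_mod_cast h1)
  rw [this, Int.cast_zero, eq_comm, sub_eq_zero] at hk
  exact h0 hk

lemma tendsto_normalize_slope {n : ℕ} {u : ℝ → EuclideanSpace ℝ (Fin n)}
    (hu : ContDiff ℝ 1 u) {x : ℝ} (hd : deriv u x ≠ 0) :
    Tendsto (fun y => ‖slope u x y‖⁻¹ • slope u x y) (𝓝[≠] x) (𝓝 (unitTangent u x)) := by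
  have h := ((hu.differentiable one_ne_zero) x).hasDerivAt.tendsto_slope
  exact (h.norm.inv₀ (norm_ne_zero_iff.2 hd)).smul h

lemma tendsto_secant_right {n : ℕ} {u : ℝ → EuclideanSpace ℝ (Fin n)}
    (hu : ContDiff ℝ 1 u) {x : ℝ} (hd : deriv u x ≠ 0) :
    Tendsto (secant u x) (𝓝[>] x) (𝓝 (unitTangent u x)) := by
  refine ((tendsto_normalize_slope hu hd).mono_left (nhdsGT_le_nhdsNE x)).congr' ?_
  filter_upwards [self_mem_nhdsWithin] with y hy
  have hy' : 0 < y - x := sub_pos.2 hy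
  rw [slope_def_module, norm_smul, Real.norm_of_nonneg (inv_nonneg.2 hy'.le), smul_smul, secant]
  congr 1
  field_simp

lemma tendsto_secant_left {n : ℕ} {u : ℝ → EuclideanSpace ℝ (Fin n)}
    (hu : ContDiff ℝ 1 u) {x : ℝ} (hd : deriv u x ≠ 0) :
    Tendsto (secant u x) (𝓝[<] x) (𝓝 (-unitTangent u x)) := by
  refine ((tendsto_normalize_slope hu hd).mono_left (nhdsLT_le_nhdsNE x)).neg.congr' ?_
  filter_upwards [self_mem_nhdsWithin] with y hy
  have hy' : 0 < x - y := sub_pos.2 hy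
  rw [slope_def_module, norm_smul, smul_smul, secant, norm_inv, Real.norm_eq_abs, abs_sub_comm,
    abs_of_pos hy', ← neg_smul, ← neg_sub x y]
  congr 1
  field_simp

lemma norm_unitTangent_sub_le_of_lt {n : ℕ} {q B : ℝ} (hq : 1 < q)
    {u : ℝ → EuclideanSpace ℝ (Fin n)} (hu : ContDiff ℝ 1 u) (hper : Function.Periodic u 1)
    (hemb : Embedded u) (hd : ∀ x, deriv u x ≠ 0) (hB : 0 ≤ B) {x y : ℝ} (hxy : x < y)
    (hxy1 : y < x + 1) (hx : tpDensity q u x ≤ ENNReal.ofReal B)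
    (hy : tpDensity q u y ≤ ENNReal.ofReal B) :
    ‖unitTangent u x - unitTangent u y‖ ≤ 2 * ((y - x) ^ (1 - 1 / q) * B ^ (1 / q)) := by
  have hs : 0 ≤ 1 - 1 / q := by
    rw [sub_nonneg, div_le_one (by linarith)]; exact hq.le
  have h1 : ‖secant u x y - unitTangent u x‖ ≤ (y - x) ^ (1 - 1 / q) * B ^ (1 / q) := by
    refine le_of_tendsto (tendsto_const_nhds.sub (tendsto_secant_right hu (hd x))).norm ?_
    filter_upwards [Ioo_mem_nhdsGT hxy] with t ht
    refine (norm_secant_sub_le hq hu hper hB hx ht.2.le (by linarith [ht.1]) fun z hz =>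
      hemb.ne_of_abs_sub_lt_one (by linarith [ht.1, hz.1] : x < z).ne' ?_).trans ?_
    · rw [abs_lt]; constructor <;> linarith [hz.1, hz.2, ht.1]
    · have := sub_nonneg.2 ht.2.le
      gcongr
      exact ht.1.le
  have h2 : ‖-unitTangent u y - secant u y x‖ ≤ (y - x) ^ (1 - 1 / q) * B ^ (1 / q) := by
    refine le_of_tendsto ((tendsto_secant_left hu (hd y)).sub tendsto_const_nhds).norm ?_
    filter_upwards [Ioo_mem_nhdsLT hxy] with t ht
    refine (norm_secant_sub_le hq hu hper hB hy ht.1.le (by linarith [ht.2]) fun z hz =>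
      hemb.ne_of_abs_sub_lt_one (by linarith [ht.2, hz.2] : z < y).ne ?_).trans ?_
    · rw [abs_lt]; constructor <;> linarith [hz.1, hz.2, ht.2]
    · have := sub_nonneg.2 ht.1.le
      gcongr
      exact ht.2.le
  rw [secant_swap u x y] at h2
  calc ‖unitTangent u x - unitTangent u y‖
      = ‖(-unitTangent u y - -secant u x y) - (secant u x y - unitTangent u x)‖ := by
        congr 1; abel
    _ ≤ _ := (norm_sub_le _ _).trans (by linarith)

lemma norm_unitTangent_sub_le {n : ℕ} {q B : ℝ} (hq : 1 < q)
    {u : ℝ → EuclideanSpace ℝ (Fin n)} (hu : ContDiff ℝ 1 u) (hper : Function.Periodic u 1)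
    (hemb : Embedded u) (hd : ∀ x, deriv u x ≠ 0) (hB : 0 ≤ B) {x y : ℝ} (hxy : |x - y| < 1)
    (hx : tpDensity q u x ≤ ENNReal.ofReal B) (hy : tpDensity q u y ≤ ENNReal.ofReal B) :
    ‖unitTangent u x - unitTangent u y‖ ≤ 2 * (|x - y| ^ (1 - 1 / q) * B ^ (1 / q)) := by
  rcases lt_trichotomy x y with h | rfl | h
  · rw [abs_sub_comm] at hxy ⊢
    rw [abs_of_pos (sub_pos.2 h)] at hxy ⊢
    exact norm_unitTangent_sub_le_of_lt hq hu hper hemb hd hB h (by linarith) hx hy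
  · rw [sub_self, norm_zero]
    positivity
  · rw [abs_of_pos (sub_pos.2 h)] at hxy ⊢
    rw [norm_sub_rev]
    exact norm_unitTangent_sub_le_of_lt hq hu hper hemb hd hB h (by linarith) hy hx

lemma norm_unitTangent_sub_le_of_scale {n : ℕ} {q A : ℝ} (hq : 1 < q)
    {u : ℝ → EuclideanSpace ℝ (Fin n)} (hu : ContDiff ℝ 1 u) (hper : Function.Periodic u 1)
    (hemb : Embedded u) (hd : ∀ x, deriv u x ≠ 0) (hA : 0 < A) {ρ : ℝ} (hρ : 0 < ρ)
    (hρ1 : 2 * ρ < 1) {x y : ℝ} (hxy : |x - y| ≤ 2 * ρ)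
    (hx : tpDensity q u x ≤ ENNReal.ofReal (2 * A / ρ))
    (hy : tpDensity q u y ≤ ENNReal.ofReal (2 * A / ρ)) :
    ‖unitTangent u x - unitTangent u y‖ ≤ 4 * A ^ (1 / q) * ρ ^ (1 - 2 / q) := by
  have hs : 0 ≤ 1 - 1 / q := by
    rw [sub_nonneg, div_le_one (by linarith)]; exact hq.le
  calc ‖unitTangent u x - unitTangent u y‖
      ≤ 2 * (|x - y| ^ (1 - 1 / q) * (2 * A / ρ) ^ (1 / q)) :=
        norm_unitTangent_sub_le hq hu hper hemb hd (by positivity) (by linarith) hx hy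
    _ ≤ 2 * ((2 * ρ) ^ (1 - 1 / q) * (2 * A / ρ) ^ (1 / q)) := by gcongr
    _ = 4 * A ^ (1 / q) * ρ ^ (1 - 2 / q) := by
      rw [Real.mul_rpow zero_le_two hρ.le, Real.div_rpow (by positivity) hρ.le,
        Real.mul_rpow zero_le_two hA.le, show 1 - 2 / q = (1 - 1 / q) - 1 / q by ring,
        Real.rpow_sub hρ (1 - 1 / q), Real.rpow_sub zero_lt_two 1, Real.rpow_one]
      have : (2 : ℝ) ^ (1 / q) ≠ 0 := by positivity
      field_simp
      norm_num

lemma continuous_unitTangent {n : ℕ} {u : ℝ → EuclideanSpace ℝ (Fin n)}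
    (hu : ContDiff ℝ 1 u) (hd : ∀ x, deriv u x ≠ 0) : Continuous (unitTangent u) := by
  have h2 : Continuous (deriv u) := hu.continuous_deriv le_rfl
  exact (h2.norm.inv₀ fun x => norm_ne_zero_iff.2 (hd x)).smul h2

/-- Summing the scale estimate over a chain of points of small density converging to `x`. -/
lemma norm_unitTangent_sub_le_of_density {n : ℕ} {q A : ℝ} (hq : 2 < q)
    {u : ℝ → EuclideanSpace ℝ (Fin n)} (hu : ContDiff ℝ 1 u) (hper : Function.Periodic u 1)
    (hemb : Embedded u) (hd : ∀ x, deriv u x ≠ 0) (hA : 0 < A)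
    (hT : ∫⁻ x in Ioc (0 : ℝ) 1, tpDensity q u x ≤ ENNReal.ofReal A) {r : ℝ} (hr : 0 < r)
    (hr1 : 2 * r < 1) {w x : ℝ} (hwx : |w - x| ≤ r)
    (hw : tpDensity q u w ≤ ENNReal.ofReal (A / r)) :
    ‖unitTangent u w - unitTangent u x‖ ≤
      4 * A ^ (1 / q) * r ^ (1 - 2 / q) / (1 - (1 / 2 : ℝ) ^ (1 - 2 / q)) := by
  have hα : 0 < 1 - 2 / q := by
    rw [sub_pos, div_lt_one (by linarith)]; exact hq
  have hex : ∀ k : ℕ, ∃ y : ℝ, |y - x| ≤ r * (1 / 2) ^ k ∧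
      tpDensity q u y ≤ ENNReal.ofReal (A / (r * (1 / 2) ^ k)) ∧ (k = 0 → y = w) := by
    intro k
    have hk1 : (1 / 2 : ℝ) ^ k ≤ 1 := pow_le_one₀ (by norm_num) (by norm_num)
    rcases eq_or_ne k 0 with rfl | hk
    · exact ⟨w, by simpa using hwx, by simpa using hw, fun _ => rfl⟩
    · obtain ⟨y, hy, hy'⟩ := exists_tpDensity_le hu hper hT x (r := r * (1 / 2) ^ k)
        (by positivity) (by nlinarith)
      refine ⟨y, ?_, hy', fun h => absurd h hk⟩
      rw [abs_of_pos (sub_pos.2 hy.1)]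
      linarith [hy.2]
  choose y hyx hyd hy0 using hex
  have hstep : ∀ k, dist (unitTangent u (y k)) (unitTangent u (y (k + 1))) ≤
      4 * A ^ (1 / q) * r ^ (1 - 2 / q) * ((1 / 2 : ℝ) ^ (1 - 2 / q)) ^ k := by
    intro k
    have hk1 : (1 / 2 : ℝ) ^ k ≤ 1 := pow_le_one₀ (by norm_num) (by norm_num)
    have hρ : 0 < r * (1 / 2 : ℝ) ^ k := by positivity
    have h1 := hyx k
    have h2 := hyx (k + 1)
    have h3 := hyd (k + 1)
    rw [pow_succ] at h2 h3
    rw [dist_eq_norm]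
    refine (norm_unitTangent_sub_le_of_scale (by linarith) hu hper hemb hd hA hρ (by nlinarith)
      ?_ ((hyd k).trans ?_) (h3.trans ?_)).trans_eq ?_
    · have := abs_sub_le (y k) x (y (k + 1))
      rw [abs_sub_comm x] at this
      linarith
    · gcongr
      linarith
    · refine ENNReal.ofReal_le_ofReal (le_of_eq ?_)
      field_simp
    · rw [Real.mul_rpow hr.le (by positivity), ← Real.rpow_natCast, ← Real.rpow_natCast,
        ← Real.rpow_mul (by positivity), ← Real.rpow_mul (by positivity), mul_comm (k : ℝ)]
      ring
  have hlim : Tendsto y atTop (𝓝 x) := by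
    rw [tendsto_iff_dist_tendsto_zero]
    refine squeeze_zero (g := fun k => r * (1 / 2) ^ k) (fun _ => dist_nonneg) hyx ?_
    simpa using (tendsto_pow_atTop_nhds_zero_of_lt_one (r := (1 / 2 : ℝ)) (by norm_num)
      (by norm_num)).const_mul r
  have := dist_le_of_le_geometric_of_tendsto₀ _ _
    (Real.rpow_lt_one (by norm_num) (by norm_num) hα) hstep
    (((continuous_unitTangent hu hd).tendsto x).comp hlim)
  rwa [hy0 0 rfl, dist_eq_norm] at this

lemma exists_forall_mul_rpow_lt {α : ℝ} (hα : 0 < α) (K : ℝ) {ε : ℝ} (hε : 0 < ε) :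
    ∃ r₀ > 0, ∀ r, 0 < r → r ≤ r₀ → K * r ^ α < ε := by
  have h : Tendsto (fun r : ℝ => K * r ^ α) (𝓝 0) (𝓝 0) := by
    have := ((Real.continuousAt_rpow_const 0 α (Or.inr hα.le)).tendsto).const_mul K
    simpa [Real.zero_rpow hα.ne'] using this
  obtain ⟨r₀, h0, hr⟩ := Metric.eventually_nhds_iff.1 (h.eventually (gt_mem_nhds hε))
  refine ⟨r₀ / 2, by positivity, fun r hr0 hr1 => hr ?_⟩
  rw [Real.dist_eq, sub_zero, abs_of_pos hr0]
  linarith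

lemma norm_unitTangent {n : ℕ} {u : ℝ → EuclideanSpace ℝ (Fin n)} {x : ℝ}
    (hd : deriv u x ≠ 0) : ‖unitTangent u x‖ = 1 := by
  rw [unitTangent, norm_smul, norm_inv, norm_norm, inv_mul_cancel₀ (norm_ne_zero_iff.2 hd)]

/-- Uniform equicontinuity of the unit tangents of curves of bounded energy. -/
lemma exists_scale_inner_unitTangent_ge (n : ℕ) {q A : ℝ} (hq : 2 < q) (hA : 0 < A) :
    ∃ δ > 0, δ ≤ 1 / 8 ∧ ∀ u : ℝ → EuclideanSpace ℝ (Fin n), ContDiff ℝ 1 u →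
      Function.Periodic u 1 → Embedded u → (∀ x, deriv u x ≠ 0) →
      ∫⁻ x in Ioc (0 : ℝ) 1, tpDensity q u x ≤ ENNReal.ofReal A →
      ∀ x z, |x - z| ≤ δ → 1 / 2 ≤ ⟪unitTangent u x, unitTangent u z⟫ := by
  have hα : 0 < 1 - 2 / q := by
    rw [sub_pos, div_lt_one (by linarith)]; exact hq
  obtain ⟨r₀, hr0, hr⟩ := exists_forall_mul_rpow_lt hα
    (4 * (2 * A) ^ (1 / q) / (1 - (1 / 2 : ℝ) ^ (1 - 2 / q))) (by norm_num : (0 : ℝ) < 1 / 2)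
  refine ⟨min (r₀ / 2) (1 / 8), by positivity, min_le_right _ _, ?_⟩
  intro u hu hper hemb hd hT x z hxz
  set δ := min (r₀ / 2) (1 / 8) with hδ
  have hδ0 : 0 < δ := by positivity
  have hδ1 : δ ≤ r₀ / 2 := min_le_left _ _
  have hδ2 : δ ≤ 1 / 8 := min_le_right _ _
  obtain ⟨w, hw, hwd⟩ := exists_tpDensity_le hu hper hT x hδ0 (by linarith)
  have hwd' : tpDensity q u w ≤ ENNReal.ofReal (2 * A / (2 * δ)) := by
    rwa [mul_div_mul_left _ _ two_ne_zero]
  have hT' : ∫⁻ x in Ioc (0 : ℝ) 1, tpDensity q u x ≤ ENNReal.ofReal (2 * A) :=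
    hT.trans (ENNReal.ofReal_le_ofReal (by linarith))
  have hclose : ∀ y, |w - y| ≤ 2 * δ → ‖unitTangent u w - unitTangent u y‖ ≤ 1 / 2 := by
    intro y hy
    refine (norm_unitTangent_sub_le_of_density hq hu hper hemb hd (by linarith) hT'
      (by linarith : 0 < 2 * δ) (by linarith) hy hwd').trans ?_
    rw [mul_div_right_comm]
    exact (hr (2 * δ) (by linarith) (by linarith)).le
  have hwx : |w - x| ≤ δ := by
    rw [abs_of_pos (sub_pos.2 hw.1)]; linarith [hw.2]
  have h1 := hclose x (by linarith)
  have h2 := hclose z ((abs_sub_le w x z).trans (by linarith))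
  have h3 : ‖unitTangent u x - unitTangent u z‖ ≤ 1 := by
    have := norm_sub_le_norm_sub_add_norm_sub (unitTangent u x) (unitTangent u w)
      (unitTangent u z)
    rw [norm_sub_rev] at h1
    linarith
  have h4 := norm_sub_sq_real (unitTangent u x) (unitTangent u z)
  rw [norm_unitTangent (hd x), norm_unitTangent (hd z)] at h4
  nlinarith [norm_nonneg (unitTangent u x - unitTangent u z)]

lemma mul_sub_le_inner_unitTangent {n : ℕ} {lam δ : ℝ} (hlam : 0 < lam)
    {u : ℝ → EuclideanSpace ℝ (Fin n)} (hu : ContDiff ℝ 1 u) (hl : ∀ x, lam ≤ ‖deriv u x‖)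
    {y : ℝ} (hδ : ∀ z, |y - z| ≤ δ → 1 / 2 ≤ ⟪unitTangent u y, unitTangent u z⟫)
    {a b : ℝ} (ha : y - δ ≤ a) (hab : a ≤ b) (hb : b ≤ y + δ) :
    lam / 2 * (b - a) ≤ ⟪unitTangent u y, u b - u a⟫ := by
  have hder : ∀ z, HasDerivAt (fun z => ⟪unitTangent u y, u z⟫) ⟪unitTangent u y, deriv u z⟫ z :=
    fun z => by
      simpa using (hasDerivAt_const z (unitTangent u y)).inner ℝ
        ((hu.differentiable one_ne_zero) z).hasDerivAt
  have hdiff : Differentiable ℝ (fun z => ⟪unitTangent u y, u z⟫) :=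
    fun z => (hder z).differentiableAt
  rw [inner_sub_right]
  refine Convex.mul_sub_le_image_sub_of_le_deriv (convex_Icc a b) hdiff.continuous.continuousOn
    hdiff.differentiableOn (fun z hz => ?_) a (left_mem_Icc.2 hab) b (right_mem_Icc.2 hab) hab
  rw [interior_Icc] at hz
  rw [(hder z).deriv]
  have h0 : 0 < ‖deriv u z‖ := hlam.trans_le (hl z)
  have h1 : deriv u z = ‖deriv u z‖ • unitTangent u z := by
    rw [unitTangent, smul_smul, mul_inv_cancel₀ h0.ne', one_smul]
  rw [h1, real_inner_smul_right]
  have h2 := hδ z (by rw [abs_le]; constructor <;> linarith [hz.1, hz.2])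
  nlinarith [hl z]

lemma norm_sub_le_mul_abs_sub {n : ℕ} {Λ : ℝ} {u : ℝ → EuclideanSpace ℝ (Fin n)}
    (hu : ContDiff ℝ 1 u) (hL : ∀ x, ‖deriv u x‖ ≤ Λ) (a b : ℝ) :
    ‖u a - u b‖ ≤ Λ * |a - b| := by
  simpa using Convex.norm_image_sub_le_of_norm_deriv_le (s := univ)
    (fun x _ => (hu.differentiable one_ne_zero) x) (fun x _ => hL x) convex_univ
    (mem_univ b) (mem_univ a)

/-- If `u w` lies within `2 * d` of a nearly straight arc around `u y`, then the secants from `u w`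
to the two ends of that arc point in substantially different directions. -/
lemma secant_jump {n : ℕ} {lam Λ δ d : ℝ} (hlam : 0 < lam) (hΛ : 0 < Λ)
    {u : ℝ → EuclideanSpace ℝ (Fin n)} (hu : ContDiff ℝ 1 u) (hl : ∀ x, lam ≤ ‖deriv u x‖)
    (hL : ∀ x, ‖deriv u x‖ ≤ Λ) {w y : ℝ}
    (hδ : ∀ z, |y - z| ≤ δ → 1 / 2 ≤ ⟪unitTangent u y, unitTangent u z⟫) (hd : 0 < d)
    (hdδ : 8 / lam * d ≤ δ) (hw : ‖u w - u y‖ ≤ 2 * d) :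
    4 / (8 * Λ / lam + 2) ≤
      ‖secant u w (y + 8 / lam * d) - secant u w (y - 8 / lam * d)‖ := by
  set h := 8 / lam * d with hh
  have hh0 : 0 < h := by positivity
  set e := unitTangent u y with he
  have hd0 : ∀ x, deriv u x ≠ 0 := fun x => norm_pos_iff.1 (hlam.trans_le (hl x))
  have he1 : ‖e‖ = 1 := norm_unitTangent (hd0 y)
  have hwe : |⟪e, u w - u y⟫| ≤ 2 * d :=
    (abs_real_inner_le_norm _ _).trans (by rw [he1, one_mul]; exact hw)
  have hlh : lam / 2 * h = 4 * d := by rw [hh]; field_simp; norm_num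
  have hbound : ∀ z, |z - y| = h → ‖u z - u w‖ ≤ (8 * Λ / lam + 2) * d := by
    intro z hz
    have h1 := norm_sub_le_norm_sub_add_norm_sub (u z) (u y) (u w)
    have h2 := norm_sub_le_mul_abs_sub hu hL z y
    rw [hz] at h2
    rw [norm_sub_rev (u y)] at h1
    have h3 : (8 * Λ / lam + 2) * d = Λ * h + 2 * d := by rw [hh]; ring
    linarith
  have hcalc : ∀ v : EuclideanSpace ℝ (Fin n), ‖v‖ ≤ (8 * Λ / lam + 2) * d →
      2 * d ≤ ⟪e, v⟫ → 2 / (8 * Λ / lam + 2) ≤ ⟪e, ‖v‖⁻¹ • v⟫ := by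
    intro v hv1 hv2
    have hv0 : 0 < ‖v‖ := by
      rw [norm_pos_iff]
      rintro rfl
      rw [inner_zero_right] at hv2
      linarith
    rw [real_inner_smul_right, inv_mul_eq_div, div_le_div_iff₀ (by positivity) hv0]
    calc 2 * ‖v‖ ≤ 2 * ((8 * Λ / lam + 2) * d) := by gcongr
      _ = (2 * d) * (8 * Λ / lam + 2) := by ring
      _ ≤ _ := by gcongr
  have hp : 2 / (8 * Λ / lam + 2) ≤ ⟪e, secant u w (y + h)⟫ := by
    refine hcalc _ (hbound _ (by rw [add_sub_cancel_left, abs_of_pos hh0])) ?_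
    have h1 := mul_sub_le_inner_unitTangent hlam hu hl hδ (a := y) (b := y + h)
      (by linarith) (by linarith) (by linarith)
    rw [← sub_sub_sub_cancel_right (u (y + h)) (u w) (u y), inner_sub_right]
    rw [add_sub_cancel_left] at h1
    linarith [(abs_le.1 hwe).2]
  have hm : 2 / (8 * Λ / lam + 2) ≤ ⟪e, -secant u w (y - h)⟫ := by
    have h1 := mul_sub_le_inner_unitTangent hlam hu hl hδ (a := y - h) (b := y)
      (by linarith) (by linarith) (by linarith)
    rw [← secant_swap u w (y - h), secant]
    refine hcalc _ ?_ ?_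
    · rw [norm_sub_rev]
      exact hbound _ (by rw [sub_sub_cancel_left, abs_neg, abs_of_pos hh0])
    · rw [← sub_add_sub_cancel (u w) (u y) (u (y - h)), inner_add_right]
      rw [sub_sub_cancel] at h1
      linarith [(abs_le.1 hwe).1]
  have hle := real_inner_le_norm e (secant u w (y + h) - secant u w (y - h))
  rw [he1, one_mul, sub_eq_add_neg, inner_add_right, ← sub_eq_add_neg] at hle
  calc 4 / (8 * Λ / lam + 2) = 2 / (8 * Λ / lam + 2) + 2 / (8 * Λ / lam + 2) := by ring
    _ ≤ _ := by linarith

lemma mul_abs_sub_le_of_close {n : ℕ} {lam δ : ℝ} (hlam : 0 < lam)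
    {u : ℝ → EuclideanSpace ℝ (Fin n)} (hu : ContDiff ℝ 1 u) (hl : ∀ x, lam ≤ ‖deriv u x‖)
    {x y : ℝ} (hδ : ∀ z, |y - z| ≤ δ → 1 / 2 ≤ ⟪unitTangent u y, unitTangent u z⟫)
    (hxy : |x - y| ≤ δ) : lam / 2 * |x - y| ≤ ‖u x - u y‖ := by
  have h1 : ‖unitTangent u y‖ = 1 := norm_unitTangent (norm_pos_iff.1 (hlam.trans_le (hl y)))
  obtain ⟨h2, h3⟩ := abs_le.1 hxy
  have h4 := abs_real_inner_le_norm (unitTangent u y) (u x - u y)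
  rw [h1, one_mul] at h4
  refine le_trans ?_ h4
  rcases le_total x y with h | h
  · have := mul_sub_le_inner_unitTangent hlam hu hl hδ (a := x) (b := y)
      (by linarith) h (by linarith)
    rw [abs_sub_comm, abs_of_nonneg (sub_nonneg.2 h), ← neg_sub (u y) (u x), inner_neg_right,
      abs_neg]
    exact this.trans (le_abs_self _)
  · have := mul_sub_le_inner_unitTangent hlam hu hl hδ (a := y) (b := x)
      (by linarith) h (by linarith)
    rw [abs_of_nonneg (sub_nonneg.2 h)]
    exact this.trans (le_abs_self _)

/-- Arcs far apart in the parameter stay at a distance bounded below in terms of the energy. -/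
lemma lt_norm_sub_of_far {n : ℕ} {q A lam Λ δ d₀ : ℝ} (hq : 2 < q) (hA : 0 < A) (hlam : 0 < lam)
    (hΛ : 0 < Λ) {u : ℝ → EuclideanSpace ℝ (Fin n)} (hu : ContDiff ℝ 1 u)
    (hper : Function.Periodic u 1) (hemb : Embedded u) (hl : ∀ x, lam ≤ ‖deriv u x‖)
    (hL : ∀ x, ‖deriv u x‖ ≤ Λ)
    (hT : ∫⁻ x in Ioc (0 : ℝ) 1, tpDensity q u x ≤ ENNReal.ofReal A) (hδ0 : 0 < δ)
    (hδ1 : δ ≤ 1 / 8) {x y : ℝ}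
    (hδ : ∀ z, |y - z| ≤ δ → 1 / 2 ≤ ⟪unitTangent u y, unitTangent u z⟫)
    (hd₀ : ∀ d, 0 < d → d ≤ d₀ → (16 / lam) ^ (1 - 1 / q) * (A * Λ) ^ (1 / q) * d ^ (1 - 2 / q) <
      4 / (8 * Λ / lam + 2))
    (hd₀lam : 8 / lam * d₀ ≤ δ / 4) (hd₀Λ : d₀ / Λ ≤ δ / 2) (hxy : δ < |x - y|)
    (hxy1 : |x - y| ≤ 1 / 2) : d₀ < ‖u x - u y‖ := by
  by_contra! hle
  set d := ‖u x - u y‖ with hd_def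
  have hd : 0 < d := by
    refine norm_pos_iff.2 (sub_ne_zero.2 (hemb.ne_of_abs_sub_lt_one ?_ (by linarith)))
    rintro rfl
    rw [sub_self, abs_zero] at hxy
    linarith
  have hdΛ : d / Λ ≤ δ / 2 := le_trans (by gcongr) hd₀Λ
  have hdlam : 8 / lam * d ≤ δ / 4 := le_trans (by gcongr) hd₀lam
  obtain ⟨w, hw, hwd⟩ := exists_tpDensity_le hu hper hT x (div_pos hd hΛ) (by linarith)
  have hwx : |w - x| ≤ d / Λ := by
    rw [abs_of_pos (sub_pos.2 hw.1)]; linarith [hw.2]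
  have hwy : ‖u w - u y‖ ≤ 2 * d := by
    have h1 := norm_sub_le_norm_sub_add_norm_sub (u w) (u x) (u y)
    have h2 := norm_sub_le_mul_abs_sub hu hL w x
    have h3 : Λ * |w - x| ≤ d := by rw [mul_comm]; exact (le_div_iff₀ hΛ).1 hwx
    linarith
  have hjump := secant_jump hlam hΛ hu hl hL hδ hd (by linarith) hwy
  have hh : 0 < 8 / lam * d := by positivity
  have hhol := norm_secant_sub_le (by linarith) hu hper (by positivity) hwd
    (y₁ := y - 8 / lam * d) (y₂ := y + 8 / lam * d) (by linarith) (by linarith) fun z hz => by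
      have h1 : |z - y| ≤ δ / 4 := by rw [abs_le]; constructor <;> linarith [hz.1, hz.2]
      have h2 := abs_sub_le x w y
      have h3 := abs_sub_le w z y
      have h4 := abs_sub_le z y w
      have h5 := abs_sub_le y x w
      rw [abs_sub_comm x w] at h2 h5
      rw [abs_sub_comm y x] at h5
      refine hemb.ne_of_abs_sub_lt_one ?_ (by linarith)
      rintro rfl
      linarith
  have heq : (y + 8 / lam * d - (y - 8 / lam * d)) ^ (1 - 1 / q) * (A / (d / Λ)) ^ (1 / q) =
      (16 / lam) ^ (1 - 1 / q) * (A * Λ) ^ (1 / q) * d ^ (1 - 2 / q) := by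
    rw [show y + 8 / lam * d - (y - 8 / lam * d) = 16 / lam * d by ring,
      show A / (d / Λ) = A * Λ / d by field_simp, Real.mul_rpow (by positivity) hd.le,
      Real.div_rpow (by positivity) hd.le, show 1 - 2 / q = (1 - 1 / q) - 1 / q by ring,
      Real.rpow_sub hd (1 - 1 / q)]
    ring
  rw [heq] at hhol
  linarith [hd₀ d hd hle]

lemma bil_le {n : ℕ} {C : ℝ} {u : ℝ → EuclideanSpace ℝ (Fin n)}
    (h : ∀ x y : ℝ, circDist x y ≤ C * ‖u x - u y‖) : bil u ≤ ENNReal.ofReal C := by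
  refine iSup_le fun x => iSup_le fun y => iSup_le fun hxy => ?_
  have hpos : 0 < circDist x y := lt_of_le_of_ne (norm_nonneg _) hxy.symm
  have hu : 0 < ‖u x - u y‖ := by
    refine lt_of_le_of_ne (norm_nonneg _) fun h0 => ?_
    have := h x y
    rw [← h0, mul_zero] at this
    linarith
  rw [← ENNReal.ofReal_div_of_pos hu]
  exact ENNReal.ofReal_le_ofReal ((div_le_iff₀ hu).2 (h x y))

lemma circDist_le_of_abs_sub_le_half {n : ℕ} {C : ℝ} {u : ℝ → EuclideanSpace ℝ (Fin n)}
    (hper : Function.Periodic u 1)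
    (h : ∀ x y : ℝ, |x - y| ≤ 1 / 2 → |x - y| ≤ C * ‖u x - u y‖) (x y : ℝ) :
    circDist x y ≤ C * ‖u x - u y‖ := by
  have e : circDist x y = |x - round (x - y) - y| := by
    rw [circDist, AddCircle.norm_eq, inv_one, one_mul, mul_one, sub_right_comm]
  have hx : u (x - round (x - y)) = u x := by
    simpa using hper.sub_zsmul_eq (x := x) (round (x - y))
  rw [e, ← hx]
  refine h _ _ ?_
  rw [sub_right_comm]
  exact abs_sub_round _

/-- Uniform bi-Lipschitz estimate, Proposition 3.6: there is
`C = C(lam, Λ, M, n, q)` such that every embedded regular curve with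
`lam ≤ |u'| ≤ Λ` and `TP(u) ≤ M` satisfies
`|x - y|_{ℝ/ℤ} ≤ C |u(x) - u(y)|` for all `x, y`; in particular `bil(u) ≤ C`. -/
theorem uniform_biLipschitz_estimate (n : ℕ) (q lam Λ M : ℝ) (hq : 2 < q)
    (hlam : 0 < lam) (hΛ : 0 < Λ) (hM : 0 < M) :
    ∃ C : ℝ, 0 < C ∧ ∀ u : ℝ → EuclideanSpace ℝ (Fin n),
      ContDiff ℝ 1 u → Function.Periodic u 1 → Embedded u →
      sobSemPow (1 - 1 / q) q (deriv u) < ⊤ →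
      (∀ x, lam ≤ ‖deriv u x‖) → (∀ x, ‖deriv u x‖ ≤ Λ) →
      TPe q u ≤ ENNReal.ofReal M →
      (∀ x y : ℝ, circDist x y ≤ C * ‖u x - u y‖) ∧ bil u ≤ ENNReal.ofReal C := by
  have hA : 0 < q * M := by positivity
  have hα : 0 < 1 - 2 / q := by
    rw [sub_pos, div_lt_one (by linarith)]; exact hq
  obtain ⟨δ, hδ0, hδ1, hδ⟩ := exists_scale_inner_unitTangent_ge n hq hA
  obtain ⟨r₀, hr0, hr⟩ := exists_forall_mul_rpow_lt hα
    ((16 / lam) ^ (1 - 1 / q) * (q * M * Λ) ^ (1 / q))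
    (by positivity : 0 < 4 / (8 * Λ / lam + 2))
  obtain ⟨d₀, hd0, hdr, hdlam, hdΛ⟩ : ∃ d₀ > 0, d₀ ≤ r₀ ∧ 8 / lam * d₀ ≤ δ / 4 ∧
      d₀ / Λ ≤ δ / 2 := by
    refine ⟨min r₀ (min (lam / 8 * (δ / 4)) (δ / 2 * Λ)), by positivity, min_le_left _ _, ?_, ?_⟩
    · calc 8 / lam * min r₀ (min (lam / 8 * (δ / 4)) (δ / 2 * Λ))
          ≤ 8 / lam * (lam / 8 * (δ / 4)) := by
            gcongr
            exact (min_le_right _ _).trans (min_le_left _ _)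
        _ = δ / 4 := by field_simp
    · rw [div_le_iff₀ hΛ]
      exact (min_le_right _ _).trans (min_le_right _ _)
  refine ⟨max (2 / lam) (1 / d₀), by positivity, ?_⟩
  intro u hu hper hemb _ hl hL hTP
  have hT := lintegral_tpDensity_le (by linarith) hu hTP
  have hδu := hδ u hu hper hemb (fun x => norm_pos_iff.1 (hlam.trans_le (hl x))) hT
  have main : ∀ x y : ℝ, circDist x y ≤ max (2 / lam) (1 / d₀) * ‖u x - u y‖ := by
    refine circDist_le_of_abs_sub_le_half hper fun x y hxy => ?_
    rcases le_or_gt |x - y| δ with h | h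
    · calc |x - y| = 2 / lam * (lam / 2 * |x - y|) := by field_simp
        _ ≤ 2 / lam * ‖u x - u y‖ := by
          gcongr
          exact mul_abs_sub_le_of_close hlam hu hl (hδu y) h
        _ ≤ _ := by
          gcongr
          exact le_max_left _ _
    · have hfar := lt_norm_sub_of_far hq hA hlam hΛ hu hper hemb hl hL hT hδ0 hδ1 (hδu y)
        (fun d h1 h2 => hr d h1 (h2.trans hdr)) hdlam hdΛ h hxy
      calc |x - y| ≤ 1 / d₀ * d₀ := by
            rw [one_div_mul_cancel hd0.ne']
            linarith
        _ ≤ 1 / d₀ * ‖u x - u y‖ := by gcongr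
        _ ≤ _ := by
          gcongr
          exact le_max_right _ _
  exact ⟨main, bil_le main⟩
end
end
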